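/- Polynomial bounds on the ESHOπ(IC) measures: for every ESHOπ(IC) process P, W(P) ≤ |P|^(B(P)+1), Wb(P) ≤ |P|^(B(P)+1), and pg(P) ≤ B(P)·W(P), where |P| is the size, B(P) the box depth (counting both ! and □ nesting, with B(□V)=B(V)+1), W the weight, Wb the weight before input, and pg the potential growth. -/

import Mathlib

/-! The three bounds come from inductions on processes with the parameters of the measures left free.

* Weight: if `n ≤ m` and `1 ≤ m`, then `W_n(P) ≤ |P| · m ^ B(P)`, since the only multiplications by
  `n` occur at `!` and `□`, where the box depth grows by one (`wP_le`). Each binder is followed by at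
  most as many occurrences of its variable as there are symbols in its body, so `D(P) ≤ |P|`
  (`dP_le`), and `n = D(P)`, `m = |P|` gives the bound.
* Weight before input: `Wb_n(P) ≤ W_n(P)` for every `n` (`wbP_le`).
* Potential growth: `pg_n(P) ≤ B(P) · W_n(P)` for every `n` (`pgP_le`). The essential case is `□V`:
  `n · pg_n(V) + n · W_n(V) ≤ (B(V) + 1) · n · W_n(V) ≤ B(□V) · W_n(□V)`.

Each of these is proved simultaneously for values and processes. -/


/-! Syntax of ESHOπ(IC) processes and values (variables in de Bruijn style,
channels as names): SHOπ plus spawning input `a(□x).P`, spawning abstraction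
`λ□x.P` and spawned values `□V`. -/

mutual
inductive Val : Type
  | star : Val
  | var : ℕ → Val
  | lam : Proc → Val
  | blam : Proc → Val
  | boxlam : Proc → Val
  | bang : Val → Val
  | boxv : Val → Val
inductive Proc : Type
  | nil : Proc
  | par : Proc → Proc → Proc
  | inp : ℕ → Proc → Proc
  | binp : ℕ → Proc → Proc
  | boxinp : ℕ → Proc → Proc
  | out : ℕ → Val → Proc → Proc
  | nu : ℕ → Proc → Proc
  | app : Val → Val → Proc
end

/-! Lifting and capture-avoiding substitution. -/

mutual
def liftV (c : ℕ) : Val → Val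
  | .star => .star
  | .var x => if x < c then .var x else .var (x + 1)
  | .lam P => .lam (liftP (c + 1) P)
  | .blam P => .blam (liftP (c + 1) P)
  | .boxlam P => .boxlam (liftP (c + 1) P)
  | .bang V => .bang (liftV c V)
  | .boxv V => .boxv (liftV c V)
def liftP (c : ℕ) : Proc → Proc
  | .nil => .nil
  | .par P Q => .par (liftP c P) (liftP c Q)
  | .inp a P => .inp a (liftP (c + 1) P)
  | .binp a P => .binp a (liftP (c + 1) P)
  | .boxinp a P => .boxinp a (liftP (c + 1) P)
  | .out a V P => .out a (liftV c V) (liftP c P)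
  | .nu a P => .nu a (liftP c P)
  | .app V W => .app (liftV c V) (liftV c W)
end

mutual
def substV (U : Val) (k : ℕ) : Val → Val
  | .star => .star
  | .var x => if x = k then U else if x < k then .var x else .var (x - 1)
  | .lam P => .lam (substP (liftV 0 U) (k + 1) P)
  | .blam P => .blam (substP (liftV 0 U) (k + 1) P)
  | .boxlam P => .boxlam (substP (liftV 0 U) (k + 1) P)
  | .bang V => .bang (substV U k V)
  | .boxv V => .boxv (substV U k V)
def substP (U : Val) (k : ℕ) : Proc → Proc
  | .nil => .nil
  | .par P Q => .par (substP U k P) (substP U k Q)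
  | .inp a P => .inp a (substP (liftV 0 U) (k + 1) P)
  | .binp a P => .binp a (substP (liftV 0 U) (k + 1) P)
  | .boxinp a P => .boxinp a (substP (liftV 0 U) (k + 1) P)
  | .out a V P => .out a (substV U k V) (substP U k P)
  | .nu a P => .nu a (substP U k P)
  | .app V W => .app (substV U k V) (substV U k W)
end

/-! Free channels and channel renaming (for α-conversion of restrictions). -/

mutual
def fcV : Val → Finset ℕ
  | .star => ∅
  | .var _ => ∅
  | .lam P => fcP P
  | .blam P => fcP P
  | .boxlam P => fcP P
  | .bang V => fcV V
  | .boxv V => fcV V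
def fcP : Proc → Finset ℕ
  | .nil => ∅
  | .par P Q => fcP P ∪ fcP Q
  | .inp a P => insert a (fcP P)
  | .binp a P => insert a (fcP P)
  | .boxinp a P => insert a (fcP P)
  | .out a V P => insert a (fcV V ∪ fcP P)
  | .nu a P => fcP P \ {a}
  | .app V W => fcV V ∪ fcV W
end

mutual
def chV (a b : ℕ) : Val → Val
  | .star => .star
  | .var x => .var x
  | .lam P => .lam (chP a b P)
  | .blam P => .blam (chP a b P)
  | .boxlam P => .boxlam (chP a b P)
  | .bang V => .bang (chV a b V)
  | .boxv V => .boxv (chV a b V)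
def chP (a b : ℕ) : Proc → Proc
  | .nil => .nil
  | .par P Q => .par (chP a b P) (chP a b Q)
  | .inp c P => .inp (if c = a then b else c) (chP a b P)
  | .binp c P => .binp (if c = a then b else c) (chP a b P)
  | .boxinp c P => .boxinp (if c = a then b else c) (chP a b P)
  | .out c V P => .out (if c = a then b else c) (chV a b V) (chP a b P)
  | .nu c P => if c = a then .nu c P else .nu c (chP a b P)
  | .app V W => .app (chV a b V) (chV a b W)
end

/-! Structural congruence. -/

mutual
inductive SCV : Val → Val → Prop
  | refl (V) : SCV V V
  | symm : SCV V W → SCV W V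
  | trans : SCV U V → SCV V W → SCV U W
  | lam : SCP P Q → SCV (.lam P) (.lam Q)
  | blam : SCP P Q → SCV (.blam P) (.blam Q)
  | boxlam : SCP P Q → SCV (.boxlam P) (.boxlam Q)
  | bang : SCV V W → SCV (.bang V) (.bang W)
  | boxv : SCV V W → SCV (.boxv V) (.boxv W)
inductive SCP : Proc → Proc → Prop
  | refl (P) : SCP P P
  | symm : SCP P Q → SCP Q P
  | trans : SCP P Q → SCP Q R → SCP P R
  | par : SCP P P' → SCP Q Q' → SCP (.par P Q) (.par P' Q')
  | inp : SCP P Q → SCP (.inp a P) (.inp a Q)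
  | binp : SCP P Q → SCP (.binp a P) (.binp a Q)
  | boxinp : SCP P Q → SCP (.boxinp a P) (.boxinp a Q)
  | out : SCV V W → SCP P Q → SCP (.out a V P) (.out a W Q)
  | nu : SCP P Q → SCP (.nu a P) (.nu a Q)
  | app : SCV V V' → SCV W W' → SCP (.app V W) (.app V' W')
  | assoc : SCP (.par P (.par Q R)) (.par (.par P Q) R)
  | comm : SCP (.par P Q) (.par Q P)
  | nuswap : SCP (.nu a (.nu b P)) (.nu b (.nu a P))
  | extrude : a ∉ fcP Q → SCP (.nu a (.par P Q)) (.par (.nu a P) Q)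
  | alpha : b ∉ fcP P → SCP (.nu a P) (.nu b (chP a b P))
end

/-! Reduction: the SHOπ rules plus the two spawning rules. -/

inductive Red : Proc → Proc → Prop
  | comm : Red (.par (.out a V P) (.inp a Q)) (.par P (substP V 0 Q))
  | bcomm : Red (.par (.out a (.bang V) P) (.binp a Q)) (.par P (substP V 0 Q))
  | scomm : Red (.par (.out a (.boxv V) P) (.boxinp a Q)) (.par P (substP V 0 Q))
  | beta : Red (.app (.lam P) V) (substP V 0 P)
  | bbeta : Red (.app (.blam P) (.bang V)) (substP V 0 P)
  | sbeta : Red (.app (.boxlam P) (.boxv V)) (substP V 0 P)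
  | parL : Red P Q → Red (.par P R) (.par Q R)
  | res : Red P Q → Red (.nu a P) (.nu a Q)
  | struct : SCP P P' → Red P' Q' → SCP Q' Q → Red P Q

/-- `m`-step reduction. -/
inductive RedN : ℕ → Proc → Proc → Prop
  | zero : RedN 0 P P
  | succ : Red P Q → RedN n Q R → RedN (n + 1) P R

/-! ESHOπ(IC) well-formation.  A context entry is `none` (absent) or one of
five markers: `x`, `!x`, `§x`, `□x`, `‡x`. -/

inductive EMark : Type
  | lin : EMark
  | bang : EMark
  | para : EMark
  | box : EMark
  | ddag : EMark
deriving DecidableEq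

abbrev Ctx := List (Option EMark)

/-- Contexts made only of §-marked (or absent) variables. -/
def ParaOnly (Γ : Ctx) : Prop := ∀ e ∈ Γ, e = none ∨ e = some .para

/-- Splitting one context entry between the two premises of a binary rule:
`x`, `!x` and `□x` variables go to exactly one premise, `§x` variables may be
shared (implicit contraction), and a `‡x` variable goes to one premise while
it is absorbed as `§x` by the other. -/
inductive SplitE : Option EMark → Option EMark → Option EMark → Prop
  | none : SplitE none none none
  | linL : SplitE (some .lin) (some .lin) none
  | linR : SplitE (some .lin) none (some .lin)
  | bangL : SplitE (some .bang) (some .bang) none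
  | bangR : SplitE (some .bang) none (some .bang)
  | boxL : SplitE (some .box) (some .box) none
  | boxR : SplitE (some .box) none (some .box)
  | paraL : SplitE (some .para) (some .para) none
  | paraR : SplitE (some .para) none (some .para)
  | paraB : SplitE (some .para) (some .para) (some .para)
  | ddagL : SplitE (some .ddag) (some .ddag) (some .para)
  | ddagR : SplitE (some .ddag) (some .para) (some .ddag)

inductive Split : Ctx → Ctx → Ctx → Prop
  | nil : Split [] [] []
  | cons : SplitE e e₁ e₂ → Split Γ Γ₁ Γ₂ → Split (e :: Γ) (e₁ :: Γ₁) (e₂ :: Γ₂)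

/-- Entry-wise relation between the context of `V` and the context of `!V`:
linear variables become !-marked and weakening by §-variables is allowed. -/
inductive BangE : Option EMark → Option EMark → Prop
  | lin : BangE (some .lin) (some .bang)
  | none : BangE none none
  | para : BangE none (some .para)

inductive BangCtx : Ctx → Ctx → Prop
  | nil : BangCtx [] []
  | cons : BangE e e' → BangCtx Γ Γ' → BangCtx (e :: Γ) (e' :: Γ')

/-- Entry-wise relation between the context of `V` and the context of `□V`:
linear variables become □-marked and weakening by §-variables is allowed. -/
inductive BoxE : Option EMark → Option EMark → Prop
  | lin : BoxE (some .lin) (some .box)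
  | none : BoxE none none
  | para : BoxE none (some .para)

inductive BoxCtx : Ctx → Ctx → Prop
  | nil : BoxCtx [] []
  | cons : BoxE e e' → BoxCtx Γ Γ' → BoxCtx (e :: Γ) (e' :: Γ')

/-- Entry-wise relation between the context of the premise of an input rule on
channel `a` and the context of its conclusion: every entry is unchanged,
except that when `a ∈ IC` a `□x` entry of the premise may become a `‡x` entry
of the conclusion (`c` stands for the proposition `a ∈ IC`). -/
inductive IE (c : Prop) : Option EMark → Option EMark → Prop
  | id (e) : IE c e e
  | conv : c → IE c (some .box) (some .ddag)

inductive IConv (c : Prop) : Ctx → Ctx → Prop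
  | nil : IConv c [] []
  | cons : IE c e e' → IConv c Γ Γ' → IConv c (e :: Γ) (e' :: Γ')

mutual
inductive WfV (IC : Set ℕ) : Ctx → Val → Prop
  | star : ParaOnly Γ → WfV IC Γ .star
  | varLin : ParaOnly Γ → WfV IC (some .lin :: Γ) (.var 0)
  | varPara : ParaOnly Γ → WfV IC (some .para :: Γ) (.var 0)
  | varThere : (e = none ∨ e = some EMark.para) → WfV IC Γ (.var x) →
      WfV IC (e :: Γ) (.var (x + 1))
  | lam : WfP IC (some .lin :: Γ) P → WfV IC Γ (.lam P)
  | blamBang : WfP IC (some .bang :: Γ) P → WfV IC Γ (.blam P)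
  | blamPara : WfP IC (some .para :: Γ) P → WfV IC Γ (.blam P)
  | boxlamBox : WfP IC (some .box :: Γ) P → WfV IC Γ (.boxlam P)
  | boxlamDdag : WfP IC (some .ddag :: Γ) P → WfV IC Γ (.boxlam P)
  | bang : BangCtx Γ Δ → WfV IC Γ V → WfV IC Δ (.bang V)
  | boxv : BoxCtx Γ Δ → WfV IC Γ V → WfV IC Δ (.boxv V)
inductive WfP (IC : Set ℕ) : Ctx → Proc → Prop
  | nil : ParaOnly Γ → WfP IC Γ .nil
  | par : Split Γ Γ₁ Γ₂ → WfP IC Γ₁ P → WfP IC Γ₂ Q → WfP IC Γ (.par P Q)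
  | inp : IConv (a ∈ IC) Γ' Γ → WfP IC (some .lin :: Γ') P →
      WfP IC Γ (.inp a P)
  | binpBang : IConv (a ∈ IC) Γ' Γ → WfP IC (some .bang :: Γ') P →
      WfP IC Γ (.binp a P)
  | binpPara : IConv (a ∈ IC) Γ' Γ → WfP IC (some .para :: Γ') P →
      WfP IC Γ (.binp a P)
  | boxinpBox : IConv (a ∈ IC) Γ' Γ → WfP IC (some .box :: Γ') P →
      WfP IC Γ (.boxinp a P)
  | boxinpDdag : IConv (a ∈ IC) Γ' Γ → WfP IC (some .ddag :: Γ') P →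
      WfP IC Γ (.boxinp a P)
  | out : a ∉ IC → Split Γ Γ₁ Γ₂ → WfV IC Γ₁ V → WfP IC Γ₂ P →
      WfP IC Γ (.out a V P)
  | nu : WfP IC Γ P → WfP IC Γ (.nu a P)
  | app : Split Γ Γ₁ Γ₂ → WfV IC Γ₁ V → WfV IC Γ₂ W → WfP IC Γ (.app V W)
end

/-! Measures. -/

mutual
def sizeV : Val → ℕ
  | .star => 1
  | .var _ => 1
  | .lam P => sizeP P + 1
  | .blam P => sizeP P + 1
  | .boxlam P => sizeP P + 1
  | .bang V => sizeV V + 1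
  | .boxv V => sizeV V + 1
def sizeP : Proc → ℕ
  | .nil => 1
  | .par P Q => sizeP P + sizeP Q + 1
  | .inp _ P => sizeP P + 1
  | .binp _ P => sizeP P + 1
  | .boxinp _ P => sizeP P + 1
  | .out _ V P => sizeV V + sizeP P + 1
  | .nu _ P => sizeP P + 1
  | .app V W => sizeV V + sizeV W + 1
end

-- Box depth: maximum nesting of ! and □ operators.
mutual
def bdV : Val → ℕ
  | .star => 0
  | .var _ => 0
  | .lam P => bdP P
  | .blam P => bdP P
  | .boxlam P => bdP P
  | .bang V => bdV V + 1
  | .boxv V => bdV V + 1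
def bdP : Proc → ℕ
  | .nil => 0
  | .par P Q => max (bdP P) (bdP Q)
  | .inp _ P => bdP P
  | .binp _ P => bdP P
  | .boxinp _ P => bdP P
  | .out _ V P => max (bdV V) (bdP P)
  | .nu _ P => bdP P
  | .app V W => max (bdV V) (bdV W)
end

-- Number of free occurrences of the variable (de Bruijn index) `k`.
mutual
def foV (k : ℕ) : Val → ℕ
  | .star => 0
  | .var x => if x = k then 1 else 0
  | .lam P => foP (k + 1) P
  | .blam P => foP (k + 1) P
  | .boxlam P => foP (k + 1) P
  | .bang V => foV k V
  | .boxv V => foV k V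
def foP (k : ℕ) : Proc → ℕ
  | .nil => 0
  | .par P Q => foP k P + foP k Q
  | .inp _ P => foP (k + 1) P
  | .binp _ P => foP (k + 1) P
  | .boxinp _ P => foP (k + 1) P
  | .out _ V P => foV k V + foP k P
  | .nu _ P => foP k P
  | .app V W => foV k V + foV k W
end

-- Duplicability factor.
mutual
def dV : Val → ℕ
  | .star => 1
  | .var _ => 1
  | .lam P => max (dP P) (foP 0 P)
  | .blam P => max (dP P) (foP 0 P)
  | .boxlam P => max (dP P) (foP 0 P)
  | .bang V => dV V
  | .boxv V => dV V
def dP : Proc → ℕ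
  | .nil => 1
  | .par P Q => max (dP P) (dP Q)
  | .inp _ P => max (dP P) (foP 0 P)
  | .binp _ P => max (dP P) (foP 0 P)
  | .boxinp _ P => max (dP P) (foP 0 P)
  | .out _ V P => max (dV V) (dP P)
  | .nu _ P => dP P
  | .app V W => max (dV V) (dV W)
end

-- `n`-parametrized weight.
mutual
def wV (n : ℕ) : Val → ℕ
  | .star => 1
  | .var _ => 1
  | .lam P => wP n P
  | .blam P => wP n P
  | .boxlam P => wP n P
  | .bang V => n * wV n V + 1
  | .boxv V => n * wV n V + 1
def wP (n : ℕ) : Proc → ℕ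
  | .nil => 1
  | .par P Q => wP n P + wP n Q + 1
  | .inp _ P => wP n P + 1
  | .binp _ P => wP n P + 1
  | .boxinp _ P => wP n P + 1
  | .out _ V P => wV n V + wP n P
  | .nu _ P => wP n P
  | .app V W => wV n V + wV n W + 1
end

/-- The weight. -/
def weightP (P : Proc) : ℕ := wP (dP P) P

-- `n`-parametrized weight before input: inputs on channels in `IC` count `0`.
mutual
def wbV (IC : Set ℕ) [DecidablePred (· ∈ IC)] (n : ℕ) : Val → ℕ
  | .star => 1
  | .var _ => 1
  | .lam P => wbP IC n P
  | .blam P => wbP IC n P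
  | .boxlam P => wbP IC n P
  | .bang V => n * wbV IC n V + 1
  | .boxv V => n * wbV IC n V + 1
def wbP (IC : Set ℕ) [DecidablePred (· ∈ IC)] (n : ℕ) : Proc → ℕ
  | .nil => 1
  | .par P Q => wbP IC n P + wbP IC n Q + 1
  | .inp a P => if a ∈ IC then 0 else wbP IC n P + 1
  | .binp a P => if a ∈ IC then 0 else wbP IC n P + 1
  | .boxinp a P => if a ∈ IC then 0 else wbP IC n P + 1
  | .out _ V P => wbV IC n V + wbP IC n P
  | .nu _ P => wbP IC n P
  | .app V W => wbV IC n V + wbV IC n W + 1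
end

/-- The weight before input. -/
def weightbP (IC : Set ℕ) [DecidablePred (· ∈ IC)] (P : Proc) : ℕ :=
  wbP IC (dP P) P

-- `n`-parametrized potential growth.
mutual
def pgV (IC : Set ℕ) [DecidablePred (· ∈ IC)] (n : ℕ) : Val → ℕ
  | .star => 0
  | .var _ => 0
  | .lam P => pgP IC n P
  | .blam P => pgP IC n P
  | .boxlam P => pgP IC n P
  | .bang V => n * pgV IC n V
  | .boxv V => n * pgV IC n V + n * wV n V
def pgP (IC : Set ℕ) [DecidablePred (· ∈ IC)] (n : ℕ) : Proc → ℕ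
  | .nil => 0
  | .par P Q => pgP IC n P + pgP IC n Q
  | .inp a P => if a ∈ IC then 0 else pgP IC n P
  | .binp a P => if a ∈ IC then 0 else pgP IC n P
  | .boxinp a P => if a ∈ IC then 0 else pgP IC n P
  | .out _ V P => pgV IC n V + pgP IC n P
  | .nu _ P => pgP IC n P
  | .app V W => pgV IC n V + pgV IC n W
end

/-- The potential growth. -/
def pgrowP (IC : Set ℕ) [DecidablePred (· ∈ IC)] (P : Proc) : ℕ :=
  pgP IC (dP P) P


/-! ### The duplicability factor is bounded by the size -/

mutual
theorem foV_le : ∀ (k : ℕ) (V : Val), foV k V ≤ sizeV V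
  | k, .star => by
    simp only [foV, sizeV]; omega
  | k, .var _ => by
    simp only [foV, sizeV]; split <;> omega
  | k, .lam P => by
    have hP := foP_le (k + 1) P
    simp only [foV, sizeV]; omega
  | k, .blam P => by
    have hP := foP_le (k + 1) P
    simp only [foV, sizeV]; omega
  | k, .boxlam P => by
    have hP := foP_le (k + 1) P
    simp only [foV, sizeV]; omega
  | k, .bang V => by
    have hV := foV_le k V
    simp only [foV, sizeV]; omega
  | k, .boxv V => by
    have hV := foV_le k V
    simp only [foV, sizeV]; omega
theorem foP_le : ∀ (k : ℕ) (P : Proc), foP k P ≤ sizeP P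
  | k, .nil => by
    simp only [foP, sizeP]; omega
  | k, .par P Q => by
    have hP := foP_le k P
    have hQ := foP_le k Q
    simp only [foP, sizeP]; omega
  | k, .inp _ P => by
    have hP := foP_le (k + 1) P
    simp only [foP, sizeP]; omega
  | k, .binp _ P => by
    have hP := foP_le (k + 1) P
    simp only [foP, sizeP]; omega
  | k, .boxinp _ P => by
    have hP := foP_le (k + 1) P
    simp only [foP, sizeP]; omega
  | k, .out _ V P => by
    have hV := foV_le k V
    have hP := foP_le k P
    simp only [foP, sizeP]; omega
  | k, .nu _ P => by
    have hP := foP_le k P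
    simp only [foP, sizeP]; omega
  | k, .app V W => by
    have hV := foV_le k V
    have hW := foV_le k W
    simp only [foP, sizeP]; omega
end

mutual
theorem dV_le : ∀ V : Val, dV V ≤ sizeV V
  | .star => by
    simp only [dV, sizeV]; omega
  | .var _ => by
    simp only [dV, sizeV]; omega
  | .lam P => by
    have hP := dP_le P
    have h₀ := foP_le 0 P
    simp only [dV, sizeV]; omega
  | .blam P => by
    have hP := dP_le P
    have h₀ := foP_le 0 P
    simp only [dV, sizeV]; omega
  | .boxlam P => by
    have hP := dP_le P
    have h₀ := foP_le 0 P
    simp only [dV, sizeV]; omega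
  | .bang V => by
    have hV := dV_le V
    simp only [dV, sizeV]; omega
  | .boxv V => by
    have hV := dV_le V
    simp only [dV, sizeV]; omega
theorem dP_le : ∀ P : Proc, dP P ≤ sizeP P
  | .nil => by
    simp only [dP, sizeP]; omega
  | .par P Q => by
    have hP := dP_le P
    have hQ := dP_le Q
    simp only [dP, sizeP]; omega
  | .inp _ P => by
    have hP := dP_le P
    have h₀ := foP_le 0 P
    simp only [dP, sizeP]; omega
  | .binp _ P => by
    have hP := dP_le P
    have h₀ := foP_le 0 P
    simp only [dP, sizeP]; omega
  | .boxinp _ P => by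
    have hP := dP_le P
    have h₀ := foP_le 0 P
    simp only [dP, sizeP]; omega
  | .out _ V P => by
    have hV := dV_le V
    have hP := dP_le P
    simp only [dP, sizeP]; omega
  | .nu _ P => by
    have hP := dP_le P
    simp only [dP, sizeP]; omega
  | .app V W => by
    have hV := dV_le V
    have hW := dV_le W
    simp only [dP, sizeP]; omega
end

/-! ### The weight -/

/-- Combination of two bounds of the shape `size * m ^ depth` along a binary constructor, where the
box depths are combined by `max`. -/
theorem add_le_mul_pow_max {m a b s t c d : ℕ} (hm : 1 ≤ m) (ha : a ≤ s * m ^ c)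
    (hb : b ≤ t * m ^ d) : a + b + 1 ≤ (s + t + 1) * m ^ max c d := by
  have h₁ : s * m ^ c ≤ s * m ^ max c d :=
    Nat.mul_le_mul_left _ (Nat.pow_le_pow_right hm (le_max_left _ _))
  have h₂ : t * m ^ d ≤ t * m ^ max c d :=
    Nat.mul_le_mul_left _ (Nat.pow_le_pow_right hm (le_max_right _ _))
  have h₃ : 1 ≤ m ^ max c d := Nat.one_le_pow _ _ hm
  nlinarith

theorem add_one_le_mul_pow {m a s c : ℕ} (hm : 1 ≤ m) (ha : a ≤ s * m ^ c) :
    a + 1 ≤ (s + 1) * m ^ c := by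
  have h : 1 ≤ m ^ c := Nat.one_le_pow _ _ hm
  nlinarith

/-- The box case: the factor `n ≤ m` is absorbed by one more level of box depth. -/
theorem mul_add_one_le_mul_pow_succ {n m a s c : ℕ} (hm : 1 ≤ m) (hn : n ≤ m)
    (ha : a ≤ s * m ^ c) : n * a + 1 ≤ (s + 1) * m ^ (c + 1) := by
  refine add_one_le_mul_pow hm ?_
  calc n * a ≤ m * (s * m ^ c) := Nat.mul_le_mul hn ha
    _ = s * m ^ (c + 1) := by ring

mutual
theorem wV_le {n m : ℕ} (hm : 1 ≤ m) (hn : n ≤ m) : ∀ V : Val, wV n V ≤ sizeV V * m ^ bdV V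
  | .star => by
    simp only [wV, sizeV, bdV]
    simp
  | .var _ => by
    simp only [wV, sizeV, bdV]
    simp
  | .lam P => by
    have hP := wP_le hm hn P
    simp only [wV, sizeV, bdV]
    exact (Nat.le_succ _).trans (add_one_le_mul_pow hm hP)
  | .blam P => by
    have hP := wP_le hm hn P
    simp only [wV, sizeV, bdV]
    exact (Nat.le_succ _).trans (add_one_le_mul_pow hm hP)
  | .boxlam P => by
    have hP := wP_le hm hn P
    simp only [wV, sizeV, bdV]
    exact (Nat.le_succ _).trans (add_one_le_mul_pow hm hP)
  | .bang V => by
    have hV := wV_le hm hn V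
    simp only [wV, sizeV, bdV]
    exact mul_add_one_le_mul_pow_succ hm hn hV
  | .boxv V => by
    have hV := wV_le hm hn V
    simp only [wV, sizeV, bdV]
    exact mul_add_one_le_mul_pow_succ hm hn hV
theorem wP_le {n m : ℕ} (hm : 1 ≤ m) (hn : n ≤ m) : ∀ P : Proc, wP n P ≤ sizeP P * m ^ bdP P
  | .nil => by
    simp only [wP, sizeP, bdP]
    simp
  | .par P Q => by
    have hP := wP_le hm hn P
    have hQ := wP_le hm hn Q
    simp only [wP, sizeP, bdP]
    exact add_le_mul_pow_max hm hP hQ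
  | .inp _ P => by
    have hP := wP_le hm hn P
    simp only [wP, sizeP, bdP]
    exact add_one_le_mul_pow hm hP
  | .binp _ P => by
    have hP := wP_le hm hn P
    simp only [wP, sizeP, bdP]
    exact add_one_le_mul_pow hm hP
  | .boxinp _ P => by
    have hP := wP_le hm hn P
    simp only [wP, sizeP, bdP]
    exact add_one_le_mul_pow hm hP
  | .out _ V P => by
    have hV := wV_le hm hn V
    have hP := wP_le hm hn P
    simp only [wP, sizeP, bdP]
    exact (Nat.le_succ _).trans (add_le_mul_pow_max hm hV hP)
  | .nu _ P => by
    have hP := wP_le hm hn P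
    simp only [wP, sizeP, bdP]
    exact (Nat.le_succ _).trans (add_one_le_mul_pow hm hP)
  | .app V W => by
    have hV := wV_le hm hn V
    have hW := wV_le hm hn W
    simp only [wP, sizeP, bdP]
    exact add_le_mul_pow_max hm hV hW
end

/-! ### The weight before input -/

mutual
theorem wbV_le (IC : Set ℕ) [DecidablePred (· ∈ IC)] (n : ℕ) : ∀ V : Val, wbV IC n V ≤ wV n V
  | .star => by
    simp [wbV, wV]
  | .var _ => by
    simp [wbV, wV]
  | .lam P => by
    have hP := wbP_le IC n P
    simp only [wbV, wV]
    omega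
  | .blam P => by
    have hP := wbP_le IC n P
    simp only [wbV, wV]
    omega
  | .boxlam P => by
    have hP := wbP_le IC n P
    simp only [wbV, wV]
    omega
  | .bang V => by
    have hV := wbV_le IC n V
    simp only [wbV, wV]
    gcongr
  | .boxv V => by
    have hV := wbV_le IC n V
    simp only [wbV, wV]
    gcongr
theorem wbP_le (IC : Set ℕ) [DecidablePred (· ∈ IC)] (n : ℕ) : ∀ P : Proc, wbP IC n P ≤ wP n P
  | .nil => by
    simp [wbP, wP]
  | .par P Q => by
    have hP := wbP_le IC n P
    have hQ := wbP_le IC n Q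
    simp only [wbP, wP]
    omega
  | .inp _ P => by
    have hP := wbP_le IC n P
    simp only [wbP, wP]
    split <;> omega
  | .binp _ P => by
    have hP := wbP_le IC n P
    simp only [wbP, wP]
    split <;> omega
  | .boxinp _ P => by
    have hP := wbP_le IC n P
    simp only [wbP, wP]
    split <;> omega
  | .out _ V P => by
    have hV := wbV_le IC n V
    have hP := wbP_le IC n P
    simp only [wbP, wP]
    omega
  | .nu _ P => by
    have hP := wbP_le IC n P
    simp only [wbP, wP]
    omega
  | .app V W => by
    have hV := wbV_le IC n V
    have hW := wbV_le IC n W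
    simp only [wbP, wP]
    omega
end

/-! ### The potential growth -/

theorem add_le_max_mul {a b c d v w : ℕ} (ha : a ≤ c * v) (hb : b ≤ d * w) :
    a + b ≤ max c d * (v + w) := by
  have h₁ : c * v ≤ max c d * v := Nat.mul_le_mul_right _ (le_max_left _ _)
  have h₂ : d * w ≤ max c d * w := Nat.mul_le_mul_right _ (le_max_right _ _)
  rw [mul_add]
  omega

/-- The box case: `n * w` is what a spawned value adds to the growth of its content, and it is paid
for by the extra level of box depth. -/
theorem mul_add_mul_le_succ_mul {n a c w : ℕ} (ha : a ≤ c * w) :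
    n * a + n * w ≤ (c + 1) * (n * w + 1) := by
  have h : n * a ≤ n * (c * w) := Nat.mul_le_mul_left _ ha
  nlinarith

mutual
theorem pgV_le (IC : Set ℕ) [DecidablePred (· ∈ IC)] (n : ℕ) : ∀ V : Val, pgV IC n V ≤ bdV V * wV n V
  | .star => by
    simp [pgV, wV, bdV]
  | .var _ => by
    simp [pgV, wV, bdV]
  | .lam P => by
    have hP := pgP_le IC n P
    simp only [pgV, wV, bdV]
    exact hP
  | .blam P => by
    have hP := pgP_le IC n P
    simp only [pgV, wV, bdV]
    exact hP
  | .boxlam P => by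
    have hP := pgP_le IC n P
    simp only [pgV, wV, bdV]
    exact hP
  | .bang V => by
    have hV := pgV_le IC n V
    simp only [pgV, wV, bdV]
    exact (Nat.le_add_right _ _).trans (mul_add_mul_le_succ_mul hV)
  | .boxv V => by
    have hV := pgV_le IC n V
    simp only [pgV, wV, bdV]
    exact mul_add_mul_le_succ_mul hV
theorem pgP_le (IC : Set ℕ) [DecidablePred (· ∈ IC)] (n : ℕ) : ∀ P : Proc, pgP IC n P ≤ bdP P * wP n P
  | .nil => by
    simp [pgP, wP, bdP]
  | .par P Q => by
    have hP := pgP_le IC n P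
    have hQ := pgP_le IC n Q
    simp only [pgP, wP, bdP]
    exact (add_le_max_mul hP hQ).trans (Nat.mul_le_mul_left _ (Nat.le_succ _))
  | .inp _ P => by
    have hP := pgP_le IC n P
    simp only [pgP, wP, bdP]
    split
    · exact Nat.zero_le _
    · exact hP.trans (Nat.mul_le_mul_left _ (Nat.le_succ _))
  | .binp _ P => by
    have hP := pgP_le IC n P
    simp only [pgP, wP, bdP]
    split
    · exact Nat.zero_le _
    · exact hP.trans (Nat.mul_le_mul_left _ (Nat.le_succ _))
  | .boxinp _ P => by
    have hP := pgP_le IC n P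
    simp only [pgP, wP, bdP]
    split
    · exact Nat.zero_le _
    · exact hP.trans (Nat.mul_le_mul_left _ (Nat.le_succ _))
  | .out _ V P => by
    have hV := pgV_le IC n V
    have hP := pgP_le IC n P
    simp only [pgP, wP, bdP]
    exact add_le_max_mul hV hP
  | .nu _ P => by
    have hP := pgP_le IC n P
    simp only [pgP, wP, bdP]
    exact hP
  | .app V W => by
    have hV := pgV_le IC n V
    have hW := pgV_le IC n W
    simp only [pgP, wP, bdP]
    exact (add_le_max_mul hV hW).trans (Nat.mul_le_mul_left _ (Nat.le_succ _))
end

theorem one_le_sizeP (P : Proc) : 1 ≤ sizeP P := by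
  cases P <;> simp only [sizeP] <;> omega

/-- Polynomial bounds on the ESHOπ(IC) measures: for every process `P`,
`W(P) ≤ |P|^(B(P)+1)`, `Wb(P) ≤ |P|^(B(P)+1)` and `pg(P) ≤ B(P)·W(P)`. -/
theorem eshopi_measure_bounds (IC : Set ℕ) [DecidablePred (· ∈ IC)]
    (P : Proc) :
    weightP P ≤ sizeP P ^ (bdP P + 1) ∧
      weightbP IC P ≤ sizeP P ^ (bdP P + 1) ∧
      pgrowP IC P ≤ bdP P * weightP P := by
  have hw : weightP P ≤ sizeP P ^ (bdP P + 1) :=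
    (wP_le (one_le_sizeP P) (dP_le P) P).trans (pow_succ' _ _).ge
  exact ⟨hw, (wbP_le IC (dP P) P).trans hw, pgP_le IC (dP P) P⟩
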